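/- arXiv:2408.04355 — 4 statements merged into one kernel-verified Lean document; each statement's English description precedes it below -/
import Mathlib

section
/- Let R be a finite-dimensional unital associative ℂ-algebra and p ∈ R[X] a monic polynomial. Then there exist a monic polynomial q ∈ R[X] and a monic polynomial s ∈ ℂ[X] such that p·q = q·p equals the image of s in R[X]. -/
/-!
`R[X]` is a finite module over its central subring `ℂ[X]`, so `p` is integral over `ℂ[X]`. Let
`P = Y · D + c` be its minimal polynomial over `ℂ[X]`, so that `p · D(p) = D(p) · p = -c` is central.
As `p` is monic, it is not a zero divisor; were `c = 0`, then `D(p) = 0` with `D` monic of smaller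
degree, contradicting minimality. So `c ≠ 0`, and `s = c / lc(c)` is monic with cofactor
`q = -D(p) / lc(c)`. Finally `q` is monic since both `p` and `p · q` are.
-/

open Polynomial

attribute [local instance] Polynomial.algebra

/-- `R[X]` is spanned over `ℂ[X]` by the constants taken from a finite spanning set of `R`. -/
lemma finite_polynomial_of_finite (R : Type*) [Ring R] [Algebra ℂ R] [FiniteDimensional ℂ R] :
    Module.Finite ℂ[X] R[X] := by
  classical
  obtain ⟨S, hS⟩ := Module.Finite.fg_top (R := ℂ) (M := R)
  refine ⟨S.image C, eq_top_iff.2 fun f _ => ?_⟩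
  have hC : ∀ a : R, C a ∈ Submodule.span ℂ[X] ((S.image C : Finset R[X]) : Set R[X]) := by
    intro a
    have ha : a ∈ Submodule.span ℂ (S : Set R) := hS ▸ Submodule.mem_top
    induction ha using Submodule.span_induction with
    | mem x hx => exact Submodule.subset_span (by simpa using hx)
    | zero => simp
    | add x y _ _ hx hy => rw [C_add]; exact add_mem hx hy
    | smul z x _ hx =>
      have h : (C (z • x) : R[X]) = (C z : ℂ[X]) • C x := by
        rw [Algebra.smul_def z x, Algebra.smul_def, C_mul, Polynomial.algebraMap_def,
          coe_mapRingHom, map_C]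
      rw [h]
      exact Submodule.smul_mem _ _ hx
  induction f using Polynomial.induction_on' with
  | add f g hf hg => exact add_mem (hf trivial) (hg trivial)
  | monomial n a =>
    have h : monomial n a = (X ^ n : ℂ[X]) • (C a : R[X]) := by
      rw [Algebra.smul_def, Polynomial.algebraMap_def, coe_mapRingHom, Polynomial.map_pow, map_X,
        X_pow_mul, C_mul_X_pow_eq_monomial]
    rw [h]
    exact Submodule.smul_mem _ _ (hC a)

/-- The constant term of the minimal polynomial of a monic `p` over `ℂ[X]` is nonzero, because `p`
is not a zero divisor. -/
lemma minpoly_coeff_zero_ne_zero_of_monic {R : Type*} [Ring R] [Algebra ℂ R]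
    {p : R[X]} (hp : p.Monic) (hint : IsIntegral ℂ[X] p) :
    (minpoly ℂ[X] p).coeff 0 ≠ 0 := by
  intro h0
  have hP := minpoly.monic hint
  have hdec := divX_mul_X_add (minpoly ℂ[X] p)
  rw [h0, C_0, add_zero] at hdec
  have hDm : (divX (minpoly ℂ[X] p)).Monic := by
    rw [← hdec] at hP
    exact monic_X.of_mul_monic_right hP
  have hz : aeval p (divX (minpoly ℂ[X] p)) * p = 0 := by
    have h := minpoly.aeval ℂ[X] p
    rwa [← hdec, map_mul, aeval_X] at h
  have hD0 : aeval p (divX (minpoly ℂ[X] p)) = 0 := by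
    simpa using (hp.mul_left_eq_zero_iff).1 hz
  have hmin := minpoly.min ℂ[X] p hDm hD0
  have hlt := degree_divX_lt hP.ne_zero
  exact absurd hmin (not_le.2 hlt)

/-- Let `R` be a finite-dimensional unital associative `ℂ`-algebra and
`p ∈ R[X]` a monic polynomial. Then there exist a monic polynomial `q ∈ R[X]` and a monic
polynomial `s ∈ ℂ[X]` such that `p·q = q·p` equals the image of `s` in `R[X]` (under the map
applying the unit `ℂ → R` to coefficients). -/
theorem monic_mul_eq_central_of_finiteDimensional
    (R : Type*) [Ring R] [Algebra ℂ R] [FiniteDimensional ℂ R]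
    (p : Polynomial R) (hp : p.Monic) :
    ∃ (q : Polynomial R) (s : Polynomial ℂ), q.Monic ∧ s.Monic ∧
      p * q = Polynomial.map (algebraMap ℂ R) s ∧
      q * p = Polynomial.map (algebraMap ℂ R) s := by
  have := finite_polynomial_of_finite R
  have hint : IsIntegral ℂ[X] p := IsIntegral.of_finite _ p
  set P := minpoly ℂ[X] p with hPdef
  have hc : P.coeff 0 ≠ 0 := minpoly_coeff_zero_ne_zero_of_monic hp hint
  set c := P.coeff 0
  set b := aeval p (divX P)
  have hb : b * p = -algebraMap ℂ[X] R[X] c := by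
    have h := minpoly.aeval ℂ[X] p
    rw [← hPdef, ← divX_mul_X_add P, map_add, map_mul, aeval_X, aeval_C] at h
    exact eq_neg_of_add_eq_zero_left h
  have hcomm : p * b = b * p := by
    have h : aeval p (X * divX P) = aeval p (divX P * X) := by rw [mul_comm]
    simpa only [map_mul, aeval_X] using h
  set u : ℂ[X] := C (c.leadingCoeff⁻¹)
  have hs : (c * u).Monic := monic_mul_leadingCoeff_inv hc
  have hqp : (-(b * algebraMap ℂ[X] R[X] u)) * p = Polynomial.map (algebraMap ℂ R) (c * u) := by
    rw [neg_mul, mul_assoc, Algebra.commutes u p, ← mul_assoc, hb, neg_mul, neg_neg, ← map_mul]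
    rfl
  have hpq : p * (-(b * algebraMap ℂ[X] R[X] u)) = Polynomial.map (algebraMap ℂ R) (c * u) := by
    rw [← hqp, mul_neg, neg_mul, mul_assoc, Algebra.commutes u p, ← mul_assoc, ← mul_assoc, hcomm]
  refine ⟨-(b * algebraMap ℂ[X] R[X] u), c * u, ?_, hs, hpq, hqp⟩
  exact hp.of_mul_monic_left (hpq ▸ hs.map _)
end

section
/- Let A be a unital (possibly noncommutative) ring with a derivation δ, and let F_1,…,F_n ∈ A be a nondegenerate collection, i.e. the Wronski matrix W(F_1,…,F_n) = (δ^{i−1}F_j)_{i,j=1}^{n} is invertible in M_n(A). Then there exists a unique tuple (a_0,…,a_{n−1}) ∈ A^n such that δ^n F_i + Σ_{j=0}^{n−1} a_j·δ^j F_i = 0 for every i = 1,…,n; that is, there is a unique monic differential operator of order n with coefficients in A annihilating F_1,…,F_n. -/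
/-!
Collecting the `n` annihilation conditions into a row vector turns them into the linear system
`a W = -(δ^[n] (F i))_i`, with `W` the Wronski matrix and the coefficients `a` acting from the left.
Since `W` is a unit of the matrix ring, its unique solution is `a = -(δ^[n] (F i))_i W⁻¹`:
that it solves the system uses `W⁻¹ W = 1`, and its uniqueness uses `W W⁻¹ = 1`.
-/

/-- Let `A` be a unital (possibly noncommutative) ring with a derivation `δ`,
and let `F 0, …, F (n-1) ∈ A` be a nondegenerate collection, i.e. the Wronski matrix
`W(F) = (δ^[i] (F j))_{i,j}` is invertible in `Mₙ(A)`. Then there exists a unique tuple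
`(a 0, …, a (n-1)) ∈ Aⁿ` such that `δ^[n] (F i) + Σ_j a j * δ^[j] (F i) = 0` for every `i`;
that is, there is a unique monic differential operator of order `n` with coefficients in `A`
annihilating `F 0, …, F (n-1)`. -/
theorem exists_unique_monic_annihilator
    (A : Type*) [Ring A] (δ : A → A)
    (hδadd : ∀ a b : A, δ (a + b) = δ a + δ b)
    (hδmul : ∀ a b : A, δ (a * b) = δ a * b + a * δ b)
    (n : ℕ) (F : Fin n → A)
    (hW : IsUnit (Matrix.of fun i j : Fin n => δ^[(i : ℕ)] (F j))) :
    ∃! a : Fin n → A, ∀ i : Fin n,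
      δ^[n] (F i) + ∑ j : Fin n, a j * δ^[(j : ℕ)] (F i) = 0 := by
  obtain ⟨u, hu⟩ := hW
  -- The annihilation condition is the row-vector equation `a W = -(δ^[n] F)`.
  have key : ∀ a : Fin n → A,
      (∀ i : Fin n, δ^[n] (F i) + ∑ j : Fin n, a j * δ^[(j : ℕ)] (F i) = 0) ↔
        Matrix.vecMul a (u : Matrix (Fin n) (Fin n) A) = fun i => -δ^[n] (F i) := by
    intro a
    rw [hu, funext_iff]
    refine forall_congr' fun i => ?_
    rw [add_comm, add_eq_zero_iff_eq_neg]
    rfl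
  simp only [key]
  refine ⟨Matrix.vecMul (fun i => -δ^[n] (F i)) (↑u⁻¹ : Matrix (Fin n) (Fin n) A), ?_, ?_⟩
  · simp only [Matrix.vecMul_vecMul, Units.inv_mul, Matrix.vecMul_one]
  · intro a ha
    simp only [← ha, Matrix.vecMul_vecMul, Units.mul_inv, Matrix.vecMul_one]
end

section
/- Let A be a unital (possibly noncommutative) ring with a derivation δ, let n > k ≥ 1, and let a_0,…,a_{n−1} ∈ A; write L g := δ^n g + Σ_{i=0}^{n−1} a_i·δ^i g for g ∈ A. Let G_1,…,G_k ∈ A be a nondegenerate collection with L G_j = 0 for all j, and let b_0,…,b_{k−1} ∈ A satisfy δ^k G_j + Σ_{l=0}^{k−1} b_l·δ^l G_j = 0 for all j; write P g := δ^k g + Σ_{l=0}^{k−1} b_l·δ^l g. Then there exist c_0,…,c_{n−k−1} ∈ A such that for every g ∈ A one has L g = δ^{n−k}(P g) + Σ_{j=0}^{n−k−1} c_j·δ^j(P g); i.e. the monic operator L factors as L = Q P with Q the monic operator of order n−k with coefficients c_0,…,c_{n−k−1}. -/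
/-!
The proof is right division with remainder by the monic operator `P`. Since `δ` is a derivation,
`δ^m ∘ P` is again monic, of order `m + k` (`iterate_monic_expansion`). Hence any operator of
order less than `m + k` can be written as `∑ j < m, c j * δ^j ∘ P` plus a remainder of order less
than `k` (`right_division`), by eliminating the top coefficient repeatedly. Applied to
`L - δ^(n-k) ∘ P`, which has order less than `n`, this gives `L = Q P + R` with `R` of order less
than `k`. Both `L` and `P` kill every `G j`, so `R` does too, i.e. the row of coefficients of `R`
times the Wronski matrix is zero; invertibility of the Wronski matrix forces `R = 0`.

Coefficients are indexed by `ℕ` in the auxiliary lemmas, only those in range being relevant.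
-/

/-- If `P` is monic of order `k`, then `δ^m ∘ P` is monic of order `m + k`. -/
lemma iterate_monic_expansion {A : Type*} [Ring A] (δ : A →+ A)
    (hδmul : ∀ a b : A, δ (a * b) = δ a * b + a * δ b) (k : ℕ) (b : ℕ → A) (m : ℕ) :
    ∃ e : ℕ → A, ∀ g : A,
      δ^[m] (δ^[k] g + ∑ l ∈ Finset.range k, b l * δ^[l] g) =
        δ^[m + k] g + ∑ i ∈ Finset.range (m + k), e i * δ^[i] g := by
  induction m with
  | zero => exact ⟨b, fun g => by simp⟩
  | succ m ih =>
    obtain ⟨e, he⟩ := ih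
    -- `δ (e i * δ^i g)` contributes `δ (e i)` in degree `i` and `e i` in degree `i + 1`.
    refine ⟨fun i => (if i < m + k then δ (e i) else 0) + (if i = 0 then 0 else e (i - 1)),
      fun g => ?_⟩
    have hsum : ∑ i ∈ Finset.range (m + k), (if i < m + k then δ (e i) else 0) * δ^[i] g =
        ∑ i ∈ Finset.range (m + k), δ (e i) * δ^[i] g :=
      Finset.sum_congr rfl fun i hi => by rw [if_pos (Finset.mem_range.mp hi)]
    rw [Function.iterate_succ_apply', he, map_add, map_sum, Nat.add_right_comm,
      Function.iterate_succ_apply']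
    simp only [hδmul, add_mul, Finset.sum_add_distrib]
    congr 2
    · rw [Finset.sum_range_succ, hsum]
      simp
    · rw [Finset.sum_range_succ']
      simp [Function.iterate_succ_apply']

/-- Right division of an operator of order less than `m + k` by a monic operator of order `k`. -/
lemma right_division {A : Type*} [Ring A] (δ : A →+ A)
    (hδmul : ∀ a b : A, δ (a * b) = δ a * b + a * δ b) (k : ℕ) (b : ℕ → A) (m : ℕ) :
    ∀ a : ℕ → A, ∃ c r : ℕ → A, ∀ g : A,
      ∑ i ∈ Finset.range (m + k), a i * δ^[i] g =
        ∑ j ∈ Finset.range m, c j * δ^[j] (δ^[k] g + ∑ l ∈ Finset.range k, b l * δ^[l] g) +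
          ∑ i ∈ Finset.range k, r i * δ^[i] g := by
  induction m with
  | zero => exact fun a => ⟨0, a, fun g => by simp⟩
  | succ m ih =>
    intro a
    obtain ⟨e, he⟩ := iterate_monic_expansion δ hδmul k b m
    obtain ⟨c, r, hcr⟩ := ih (fun i => a i - a (m + k) * e i)
    refine ⟨fun j => if j = m then a (m + k) else c j, r, fun g => ?_⟩
    have hsum : ∑ j ∈ Finset.range m, (if j = m then a (m + k) else c j) *
          δ^[j] (δ^[k] g + ∑ l ∈ Finset.range k, b l * δ^[l] g) =
        ∑ j ∈ Finset.range m, c j * δ^[j] (δ^[k] g + ∑ l ∈ Finset.range k, b l * δ^[l] g) :=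
      Finset.sum_congr rfl fun j hj => by rw [if_neg (Finset.mem_range.mp hj).ne]
    have h := hcr g
    simp only [sub_mul, Finset.sum_sub_distrib, mul_assoc, ← Finset.mul_sum] at h
    rw [Nat.add_right_comm, Finset.sum_range_succ, Finset.sum_range_succ _ m, hsum]
    beta_reduce
    rw [if_pos rfl, he,
      sub_eq_iff_eq_add.mp h, mul_add]
    abel

/-- Let `A` be a unital (possibly noncommutative) ring with a derivation `δ`,
let `n > k ≥ 1`, and let `a 0, …, a (n-1) ∈ A`; write `L g := δ^[n] g + Σ_i a i * δ^[i] g`.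
Let `G 0, …, G (k-1) ∈ A` be a nondegenerate collection with `L (G j) = 0` for all `j`, and let
`b 0, …, b (k-1) ∈ A` satisfy `δ^[k] (G j) + Σ_l b l * δ^[l] (G j) = 0` for all `j`; write
`P g := δ^[k] g + Σ_l b l * δ^[l] g`. Then there exist `c 0, …, c (n-k-1) ∈ A` such that for
every `g ∈ A` one has `L g = δ^[n-k] (P g) + Σ_j c j * δ^[j] (P g)`; i.e. the monic operator
`L` factors as `L = Q P` with `Q` the monic operator of order `n - k` with coefficients `c`. -/
theorem monic_operator_factorization
    (A : Type*) [Ring A] (δ : A → A)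
    (hδadd : ∀ a b : A, δ (a + b) = δ a + δ b)
    (hδmul : ∀ a b : A, δ (a * b) = δ a * b + a * δ b)
    (n k : ℕ) (hk : 1 ≤ k) (hkn : k < n)
    (a : Fin n → A) (G : Fin k → A) (b : Fin k → A)
    (hG : IsUnit (Matrix.of fun i j : Fin k => δ^[(i : ℕ)] (G j)))
    (hLG : ∀ j : Fin k, δ^[n] (G j) + ∑ i : Fin n, a i * δ^[(i : ℕ)] (G j) = 0)
    (hPG : ∀ j : Fin k, δ^[k] (G j) + ∑ l : Fin k, b l * δ^[(l : ℕ)] (G j) = 0) :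
    ∃ c : Fin (n - k) → A, ∀ g : A,
      δ^[n] g + ∑ i : Fin n, a i * δ^[(i : ℕ)] g =
        δ^[n - k] (δ^[k] g + ∑ l : Fin k, b l * δ^[(l : ℕ)] g) +
          ∑ j : Fin (n - k),
            c j * δ^[(j : ℕ)] (δ^[k] g + ∑ l : Fin k, b l * δ^[(l : ℕ)] g) := by
  obtain ⟨d, rfl⟩ : ∃ d : A →+ A, δ = d := ⟨AddMonoidHom.mk' δ hδadd, rfl⟩
  obtain ⟨m, rfl⟩ : ∃ m, n = m + k := ⟨n - k, by omega⟩
  simp only [Nat.add_sub_cancel]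
  -- Extend the coefficient families by zero so that they are indexed by `ℕ`.
  obtain ⟨a, rfl⟩ : ∃ a' : ℕ → A, a = fun i : Fin (m + k) => a' (i : ℕ) :=
    ⟨fun i => if h : i < m + k then a ⟨i, h⟩ else 0, by ext i; simp⟩
  obtain ⟨b, rfl⟩ : ∃ b' : ℕ → A, b = fun i : Fin k => b' (i : ℕ) :=
    ⟨fun i => if h : i < k then b ⟨i, h⟩ else 0, by ext i; simp⟩
  have hrange : ∀ (f : ℕ → A) (N : ℕ) (g : A),
      ∑ i : Fin N, f i * d^[(i : ℕ)] g = ∑ i ∈ Finset.range N, f i * d^[i] g :=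
    fun f N g => Fin.sum_univ_eq_sum_range (fun i => f i * d^[i] g) N
  simp only [hrange a, hrange b] at hLG hPG ⊢
  obtain ⟨e, he⟩ := iterate_monic_expansion d hδmul k b m
  obtain ⟨c, r, hcr⟩ := right_division d hδmul k b m (fun i => a i - e i)
  have key : ∀ g : A, d^[m + k] g + ∑ i ∈ Finset.range (m + k), a i * d^[i] g =
      d^[m] (d^[k] g + ∑ l ∈ Finset.range k, b l * d^[l] g) +
        ∑ j ∈ Finset.range m, c j * d^[j] (d^[k] g + ∑ l ∈ Finset.range k, b l * d^[l] g) +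
        ∑ i ∈ Finset.range k, r i * d^[i] g := by
    intro g
    have h := hcr g
    simp only [sub_mul, Finset.sum_sub_distrib] at h
    rw [add_assoc, ← h, he]
    abel
  have hrG : ∀ j, ∑ i ∈ Finset.range k, r i * d^[i] (G j) = 0 := by
    intro j
    have h := key (G j)
    rw [hLG, hPG] at h
    simpa [iterate_map_zero] using h.symm
  have hr : (fun i : Fin k => r i) = 0 := by
    obtain ⟨V, hV⟩ := hG.exists_right_inv
    have h0 : Matrix.vecMul (fun i : Fin k => r i)
        (Matrix.of fun i j : Fin k => d^[(i : ℕ)] (G j)) = 0 := by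
      ext j
      have h := hrG j
      rw [← hrange] at h
      simpa [Matrix.vecMul, dotProduct] using h
    rw [← Matrix.vecMul_one (fun i : Fin k => r i), ← hV, ← Matrix.vecMul_vecMul, h0,
      Matrix.zero_vecMul]
  refine ⟨fun j => c j, fun g => ?_⟩
  have hR : ∑ i ∈ Finset.range k, r i * d^[i] g = 0 :=
    Finset.sum_eq_zero fun i hi => by
      rw [show r i = 0 from congrFun hr ⟨i, Finset.mem_range.mp hi⟩, zero_mul]
  rw [key g, hR, add_zero, Fin.sum_univ_eq_sum_range
    (fun j => c j * d^[j] (d^[k] g + ∑ l ∈ Finset.range k, b l * d^[l] g)), Nat.add_sub_cancel]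
end

section
/- Let U be a finite-dimensional complex vector space and A : U → U a ℂ-linear map. For every polynomial u with coefficients in U (a finitely supported function u : ℕ →₀ U, representing Σ_n u(n)·xⁿ) there exists a polynomial v with coefficients in U such that v′ + A∘v = u, where v′ is the formal derivative (v′(n) := (n+1)•v(n+1)) and A∘v applies A to each coefficient of v. -/
/-!
The claim is that `L v = v′ + A ∘ v` is surjective on `U`-valued polynomials. Its range is closed
under addition, so monomials `w xᵐ` suffice, and by Fitting's lemma
`U = ker Aᵏ ⊕ range Aᵏ` for some `k ≥ 1`, so `w` may be taken in either summand.

* On `ker Aᵏ`, where `A` is nilpotent, integrate: `L (w xᵐ⁺¹ / (m+1)) = w xᵐ + A w xᵐ⁺¹ / (m+1)`,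
  and the error term has its coefficient in `ker Aᵏ⁻¹` (`OdeSolvable.single_of_mem_ker`).
* On `range Aᵏ`, where `A` is surjective, write `w = A w'`: `L (w' xᵐ) = w xᵐ + m w' xᵐ⁻¹`, and the
  error term has smaller degree (`OdeSolvable.single_of_surjOn`).
-/

/-- The polynomial `u` has the form `v′ + A ∘ v` for some polynomial `v`. -/
def OdeSolvable {U : Type*} [AddCommGroup U] [Module ℂ U] (A : U →ₗ[ℂ] U) (u : ℕ →₀ U) : Prop :=
  ∃ v : ℕ →₀ U, ∀ n : ℕ, (n + 1) • v (n + 1) + A (v n) = u n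

namespace OdeSolvable

variable {U : Type*} [AddCommGroup U] [Module ℂ U] {A : U →ₗ[ℂ] U}

lemma zero : OdeSolvable A 0 := ⟨0, by simp⟩

lemma add {u₁ u₂ : ℕ →₀ U} (h₁ : OdeSolvable A u₁) (h₂ : OdeSolvable A u₂) :
    OdeSolvable A (u₁ + u₂) := by
  obtain ⟨v₁, h₁⟩ := h₁
  obtain ⟨v₂, h₂⟩ := h₂
  refine ⟨v₁ + v₂, fun n => ?_⟩
  simp only [Finsupp.add_apply, ← h₁, ← h₂, map_add, smul_add]
  abel

lemma neg {u : ℕ →₀ U} (h : OdeSolvable A u) : OdeSolvable A (-u) := by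
  obtain ⟨v, h⟩ := h
  refine ⟨-v, fun n => ?_⟩
  simp only [Finsupp.neg_apply, ← h, map_neg, smul_neg]
  abel

lemma of_add {u₁ u₂ : ℕ →₀ U} (h : OdeSolvable A (u₁ + u₂)) (h₂ : OdeSolvable A u₂) :
    OdeSolvable A u₁ := by
  simpa using h.add h₂.neg

lemma image_single_zero (w : U) : OdeSolvable A (Finsupp.single 0 (A w)) := by
  refine ⟨Finsupp.single 0 w, fun n => ?_⟩
  rcases n with _ | n <;> simp

lemma image_single_succ (m : ℕ) (w : U) :
    OdeSolvable A (Finsupp.single m ((m + 1) • w) + Finsupp.single (m + 1) (A w)) := by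
  refine ⟨Finsupp.single (m + 1) w, fun n => ?_⟩
  by_cases h : m = n
  · subst h
    simp
  · by_cases h' : m + 1 = n
    · subst h'
      simp
    · simp [h, h']

lemma single_of_mem_ker (k : ℕ) : ∀ (m : ℕ) (w : U), (A ^ k) w = 0 →
    OdeSolvable A (Finsupp.single m w) := by
  induction k with
  | zero =>
    intro m w hw
    obtain rfl : w = 0 := by simpa using hw
    simpa using zero
  | succ k ih =>
    intro m w hw
    have hm : (m + 1 : ℂ) ≠ 0 := by exact_mod_cast m.succ_ne_zero
    have h := image_single_succ (A := A) m ((m + 1 : ℂ)⁻¹ • w)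
    have hw' : (m + 1) • ((m + 1 : ℂ)⁻¹ • w) = w := by
      rw [← Nat.cast_smul_eq_nsmul ℂ, Nat.cast_add, Nat.cast_one, smul_inv_smul₀ hm]
    rw [hw'] at h
    refine h.of_add (ih _ _ ?_)
    rw [map_smul, map_smul, ← Module.End.mul_apply, ← pow_succ, hw, smul_zero]

lemma single_of_surjOn {W : Submodule ℂ U} (hW : ∀ w ∈ W, ∃ w' ∈ W, A w' = w) (m : ℕ) :
    ∀ w ∈ W, OdeSolvable A (Finsupp.single m w) := by
  induction m with
  | zero =>
    intro w hw
    obtain ⟨w', -, rfl⟩ := hW w hw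
    exact image_single_zero w'
  | succ m ih =>
    intro w hw
    obtain ⟨w', hw', rfl⟩ := hW w hw
    have h := image_single_succ (A := A) m w'
    rw [add_comm] at h
    exact h.of_add (ih _ (W.nsmul_mem hw' _))

end OdeSolvable

/-- Let `U` be a finite-dimensional complex vector space and `A : U → U` a
`ℂ`-linear map. For every polynomial `u` with coefficients in `U` (a finitely supported function
`u : ℕ →₀ U`, representing `Σ_n u n • xⁿ`) there exists a polynomial `v` with coefficients in
`U` such that `v′ + A ∘ v = u`, where `v′` is the formal derivative (`v′ n = (n+1) • v (n+1)`)
and `A ∘ v` applies `A` to each coefficient of `v`. -/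
theorem exists_polynomial_solution_of_linear_ode
    (U : Type*) [AddCommGroup U] [Module ℂ U] [FiniteDimensional ℂ U]
    (A : U →ₗ[ℂ] U) (u : ℕ →₀ U) :
    ∃ v : ℕ →₀ U, ∀ n : ℕ, (n + 1) • v (n + 1) + A (v n) = u n := by
  obtain ⟨k, hk, hk1⟩ := (A.eventually_isCompl_ker_pow_range_pow.and
    (Filter.eventually_ge_atTop 1)).exists
  have split : ∀ w : U, ∃ a b : U, (A ^ k) a = 0 ∧ a + (A ^ k) b = w := by
    intro w
    obtain ⟨a, ha, _, ⟨b, rfl⟩, h⟩ :=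
      Submodule.mem_sup.mp (hk.sup_eq_top ▸ Submodule.mem_top : w ∈ _ ⊔ _)
    exact ⟨a, b, ha, h⟩
  -- For `x = a + Aᵏ b` with `a ∈ ker Aᵏ`, one has `Aᵏ x = A (Aᵏ (Aᵏ⁻¹ b))`; this uses `k ≥ 1`.
  have surj : ∀ w ∈ LinearMap.range (A ^ k), ∃ w' ∈ LinearMap.range (A ^ k), A w' = w := by
    rintro _ ⟨x, rfl⟩
    obtain ⟨a, b, ha, rfl⟩ := split x
    refine ⟨(A ^ k) ((A ^ (k - 1)) b), ⟨_, rfl⟩, ?_⟩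
    rw [map_add, ha, zero_add]
    simp only [← Module.End.mul_apply, ← pow_add, ← pow_succ']
    congr 2
    omega
  change OdeSolvable A u
  induction u using Finsupp.induction_linear with
  | zero => exact OdeSolvable.zero
  | add f g hf hg => exact hf.add hg
  | single m w =>
    obtain ⟨a, b, ha, rfl⟩ := split w
    rw [Finsupp.single_add]
    exact (OdeSolvable.single_of_mem_ker k m a ha).add
      (OdeSolvable.single_of_surjOn surj m _ ⟨b, rfl⟩)
end
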